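/- Let P = {x_0, …, x_{N−1}} be a point set of N points in [0,1)^s, let ε > 0, and let m ∈ ℕ with m ≥ s/ε. If there exists x ∈ [0,1]^s with |Δ(x)| > 2ε, then there exists a grid point y ∈ {0, 1/m, 2/m, …, 1}^s with |Δ(y)| > ε. -/

import Mathlib

open Finset

/-- Local discrepancy of the point set `x` at the corner point `t`:
`Δ(t) = #{n : x_n ∈ [0,t)}/N − ∏_j t_j`. -/
noncomputable def localDisc {N s : ℕ} (x : Fin N → Fin s → ℝ) (t : Fin s → ℝ) : ℝ :=
  ((univ.filter fun n => ∀ j, x n j < t j).card : ℝ) / N - ∏ j, t j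

theorem prod_diff_aux {ι : Type*} (S : Finset ι) (a b : ι → ℝ) (ha : ∀ j, 0 ≤ a j)
    (hab : ∀ j, a j ≤ b j) (hb : ∀ j, b j ≤ 1) :
    ∏ j ∈ S, b j - ∏ j ∈ S, a j ≤ ∑ j ∈ S, (b j - a j) := by
  classical
  induction S using Finset.induction_on with
  | empty => simp
  | insert i S hi ih =>
    rw [Finset.prod_insert hi, Finset.prod_insert hi, Finset.sum_insert hi]
    have h1 : ∏ j ∈ S, b j ≤ 1 :=
      Finset.prod_le_one (fun j _ => (ha j).trans (hab j)) (fun j _ => hb j)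
    have h2 : ∏ j ∈ S, a j ≤ ∏ j ∈ S, b j :=
      Finset.prod_le_prod (fun j _ => ha j) (fun j _ => hab j)
    have h3 := hab i
    have h4 := ha i
    have h5 := hb i
    nlinarith [mul_nonneg (sub_nonneg.2 h3) (sub_nonneg.2 h1),
      mul_nonneg (sub_nonneg.2 (h3.trans h5)) (sub_nonneg.2 h2)]

theorem disc_aux {N s : ℕ} (x : Fin N → Fin s → ℝ) (a b : Fin s → ℝ) (ε δ : ℝ)
    (hs : (s : ℝ) * δ ≤ ε) (ha : ∀ j, 0 ≤ a j)
    (hab : ∀ j, a j ≤ b j) (hb : ∀ j, b j ≤ 1) (hd : ∀ j, b j - a j ≤ δ) :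
    localDisc x a - ε ≤ localDisc x b := by
  have h1 := prod_diff_aux Finset.univ a b ha hab hb
  have h2 : ∑ j, (b j - a j) ≤ s * δ := by
    have := Finset.sum_le_card_nsmul Finset.univ (fun j => b j - a j) δ (fun j _ => hd j)
    simpa using this
  have h3 : ((univ.filter fun n => ∀ j, x n j < a j).card : ℝ) / N ≤
      ((univ.filter fun n => ∀ j, x n j < b j).card : ℝ) / N := by
    gcongr with n _ j
    exact hab j
  unfold localDisc
  linarith

/-- if `m ≥ s/ε` and `|Δ(x)| > 2ε` for some `x ∈ [0,1]^s`, then there is a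
point `y` of the grid `{0, 1/m, …, 1}^s` with `|Δ(y)| > ε`. -/
theorem local_disc_grid {N s : ℕ} (x : Fin N → Fin s → ℝ)
    (hx : ∀ n j, x n j ∈ Set.Ico (0:ℝ) 1) (ε : ℝ) (hε : 0 < ε)
    (m : ℕ) (hm : (s : ℝ) / ε ≤ m)
    (h : ∃ t : Fin s → ℝ, (∀ j, t j ∈ Set.Icc (0:ℝ) 1) ∧ 2 * ε < |localDisc x t|) :
    ∃ y : Fin s → ℝ, (∀ j, ∃ k : ℕ, k ≤ m ∧ y j = (k : ℝ) / m) ∧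
      ε < |localDisc x y| := by
  obtain ⟨t, ht, hbig⟩ := h
  rcases Nat.eq_zero_or_pos s with rfl | hs
  · exact ⟨t, fun j => j.elim0, by linarith⟩
  have hs' : (0:ℝ) < s := by exact_mod_cast hs
  have hm0 : (0:ℝ) < m := (div_pos hs' hε).trans_le hm
  have hsd : (s:ℝ) * (1 / m) ≤ ε := by
    rw [div_le_iff₀ hε] at hm
    rw [mul_one_div, div_le_iff₀ hm0]
    linarith
  have hmt : ∀ j, (m:ℝ) * t j ≤ m := fun j => by nlinarith [(ht j).2]
  have hmt0 : ∀ j, 0 ≤ (m:ℝ) * t j := fun j => mul_nonneg hm0.le (ht j).1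
  rcases lt_abs.1 hbig with h | h
  · have hk : ∀ j, ⌈(m:ℝ) * t j⌉₊ ≤ m := fun j => Nat.ceil_le.2 (hmt j)
    refine ⟨fun j => (⌈(m:ℝ) * t j⌉₊ : ℝ) / m, fun j => ⟨_, hk j, rfl⟩, ?_⟩
    have := disc_aux x t (fun j => (⌈(m:ℝ) * t j⌉₊ : ℝ) / m) ε (1 / m) hsd
      (fun j => (ht j).1)
      (fun j => by
        rw [le_div_iff₀ hm0]
        linarith [Nat.le_ceil ((m:ℝ) * t j)])
      (fun j => by
        rw [div_le_one hm0]
        exact_mod_cast hk j)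
      (fun j => by
        rw [sub_le_iff_le_add, div_le_iff₀ hm0, add_mul, one_div_mul_cancel hm0.ne']
        linarith [Nat.ceil_lt_add_one (hmt0 j)])
    exact lt_abs.2 (Or.inl (by linarith))
  · have hk : ∀ j, ⌊(m:ℝ) * t j⌋₊ ≤ m := fun j => Nat.floor_le_of_le (hmt j)
    refine ⟨fun j => (⌊(m:ℝ) * t j⌋₊ : ℝ) / m, fun j => ⟨_, hk j, rfl⟩, ?_⟩
    have := disc_aux x (fun j => (⌊(m:ℝ) * t j⌋₊ : ℝ) / m) t ε (1 / m) hsd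
      (fun j => by positivity)
      (fun j => by
        rw [div_le_iff₀ hm0]
        linarith [Nat.floor_le (hmt0 j)])
      (fun j => (ht j).2)
      (fun j => by
        rw [sub_le_iff_le_add, ← add_div, le_div_iff₀ hm0]
        linarith [Nat.lt_floor_add_one ((m:ℝ) * t j)])
    exact lt_abs.2 (Or.inr (by linarith))
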